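/- A linear map Ψ : M_2(ℂ) → M_p(ℂ) is completely positive if and only if the 2×2 block matrix with blocks [[Ψ(σ_0) + Ψ(σ_3), Ψ(σ_1) + i·Ψ(σ_2)], [Ψ(σ_1) − i·Ψ(σ_2), Ψ(σ_0) − Ψ(σ_3)]] (a matrix indexed by Fin 2 × Fin p, built via Matrix.fromBlocks) is positive semidefinite. -/

import Mathlib

/-!
Since `σ₀ ± σ₃ = 2 E₀₀, 2 E₁₁` and `σ₁ ± i σ₂ = 2 E₀₁, 2 E₁₀`, the block matrix is twice the Choi
matrix `C = (Ψ(E_ab))_{a,b}`, so the theorem is Choi's criterion: `Ψ` is completely positive iff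
`C` is positive semidefinite (`isCompletelyPositive_iff_choi`).

If `Ψ` is completely positive, `C` is the image of the block matrix `(E_ab)_{a,b}`, which is the
rank-one projector (up to scale) `v v*` with `v = ∑ e_a ⊗ e_a`. Conversely, by linearity the image
of `A` has entries `∑ a b, A (r,a) (s,b) * C (a,i) (b,j)`; these form a compression `B * H * Bᴴ` of
a submatrix `H` of `A ⊗ₖ C`, and the Kronecker product of positive semidefinite matrices is
positive semidefinite.
-/

open Matrix Kronecker
open scoped ComplexOrder

noncomputable section

/-- A linear map `Φ` from matrices indexed by `α` to `p × p` matrices is completely positive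
if for every `k ≥ 1` and every positive semidefinite matrix `A` indexed by `Fin k × α`,
the block matrix whose `(r,s)` block is `Φ` applied to the `(r,s)` block of `A` is
positive semidefinite. -/
def IsCompletelyPositive {α : Type*} [Fintype α] [DecidableEq α] {p : ℕ}
    (Φ : Matrix α α ℂ →ₗ[ℂ] Matrix (Fin p) (Fin p) ℂ) : Prop :=
  ∀ (k : ℕ), 0 < k → ∀ A : Matrix (Fin k × α) (Fin k × α) ℂ, A.PosSemidef →
    (Matrix.of fun (r s : Fin k × Fin p) =>
      Φ (Matrix.of fun a b => A (r.1, a) (s.1, b)) r.2 s.2).PosSemidef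

/-- The transpose of a linear map `L` on square matrices with respect to the bilinear form
`(A, B) ↦ tr(Aᵀ B)`: the map whose matrix in the standard basis `{E_{ij}}` is the transpose
of the matrix of `L`. -/
def lmapTranspose {ι : Type*} [Fintype ι] [DecidableEq ι]
    (L : Matrix ι ι ℂ →ₗ[ℂ] Matrix ι ι ℂ) : Matrix ι ι ℂ →ₗ[ℂ] Matrix ι ι ℂ :=
  (LinearMap.toMatrix (Matrix.stdBasis ℂ ι ι) (Matrix.stdBasis ℂ ι ι)).symm
    ((LinearMap.toMatrix (Matrix.stdBasis ℂ ι ι) (Matrix.stdBasis ℂ ι ι) L)ᵀ)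
/-- The Pauli matrices `σ_0, σ_1, σ_2, σ_3`. -/
def pauli : Fin 4 → Matrix (Fin 2) (Fin 2) ℂ :=
  ![!![1, 0; 0, 1], !![0, 1; 1, 0], !![0, -Complex.I; Complex.I, 0], !![1, 0; 0, -1]]

/-- The Choi matrix of `Ψ`: its `(a, b)` block is `Ψ E_ab`. -/
def choiMatrix {p : ℕ} (Ψ : Matrix (Fin 2) (Fin 2) ℂ →ₗ[ℂ] Matrix (Fin p) (Fin p) ℂ) :
    Matrix (Fin 2 × Fin p) (Fin 2 × Fin p) ℂ :=
  Matrix.of fun x y => Ψ (Matrix.single x.1 y.1 1) x.2 y.2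

lemma apply_eq_sum_choi {p : ℕ} (Ψ : Matrix (Fin 2) (Fin 2) ℂ →ₗ[ℂ] Matrix (Fin p) (Fin p) ℂ)
    (X : Matrix (Fin 2) (Fin 2) ℂ) (i j : Fin p) :
    Ψ X i j = ∑ a, ∑ b, X a b * choiMatrix Ψ (a, i) (b, j) := by
  have hX : X = ∑ a, ∑ b, X a b • Matrix.single a b (1 : ℂ) := by
    simpa [Matrix.smul_single] using Matrix.matrix_eq_sum_single X
  conv_lhs => rw [hX]
  simp only [map_sum, map_smul, Matrix.sum_apply, Matrix.smul_apply, smul_eq_mul, choiMatrix,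
    Matrix.of_apply]

/-- Choi's criterion. -/
lemma isCompletelyPositive_iff_choi {p : ℕ}
    (Ψ : Matrix (Fin 2) (Fin 2) ℂ →ₗ[ℂ] Matrix (Fin p) (Fin p) ℂ) :
    IsCompletelyPositive Ψ ↔ (choiMatrix Ψ).PosSemidef := by
  constructor
  · intro h
    -- the unnormalized maximally entangled vector `∑ e_a ⊗ e_a`
    let v : Fin 2 × Fin 2 → ℂ := fun x => if x.1 = x.2 then 1 else 0
    have hv := h 2 (by norm_num) _ (Matrix.posSemidef_vecMulVec_self_star v)
    have hE : ∀ r s : Fin 2, (Matrix.of fun a b => vecMulVec v (star v) (r, a) (s, b)) =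
        Matrix.single r s (1 : ℂ) := by
      intro r s
      ext a b
      by_cases h1 : r = a <;> by_cases h2 : s = b <;>
        simp [v, vecMulVec_apply, h1, h2]
    simp only [hE] at hv
    exact hv
  · intro hC k _ A hA
    let f : (Fin k × Fin p) × Fin 2 → (Fin k × Fin 2) × (Fin 2 × Fin p) :=
      fun q => ((q.1.1, q.2), (q.2, q.1.2))
    -- `B` sums out the `Fin 2` index
    let B : Matrix (Fin k × Fin p) ((Fin k × Fin p) × Fin 2) ℂ :=
      Matrix.of fun r q => if q.1 = r then 1 else 0
    have hH := ((hA.kronecker hC).submatrix f).mul_mul_conjTranspose_same B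
    suffices hEq : (Matrix.of fun (r s : Fin k × Fin p) =>
        Ψ (Matrix.of fun a b => A (r.1, a) (s.1, b)) r.2 s.2) =
          B * (A ⊗ₖ choiMatrix Ψ).submatrix f f * Bᴴ by
      rw [hEq]
      exact hH
    ext r s
    rw [Matrix.of_apply, apply_eq_sum_choi]
    simp only [Matrix.mul_apply, Fintype.sum_prod_type_right (α₂ := Fin 2), B, Matrix.of_apply,
      Matrix.conjTranspose_apply, Matrix.submatrix_apply, apply_ite star, star_one, star_zero,
      mul_ite, mul_one, mul_zero, ite_mul, one_mul, zero_mul, Finset.sum_ite_eq',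
      Finset.mem_univ, if_true, f, Matrix.kroneckerMap_apply]
    exact Finset.sum_comm

/-- The block matrix of the Pauli images is twice the Choi matrix, with the index set
`Fin p ⊕ Fin p` identified with `Fin 2 × Fin p`. -/
lemma fromBlocks_pauli_eq {p : ℕ}
    (Ψ : Matrix (Fin 2) (Fin 2) ℂ →ₗ[ℂ] Matrix (Fin p) (Fin p) ℂ) :
    Matrix.fromBlocks
        (Ψ (pauli 0) + Ψ (pauli 3)) (Ψ (pauli 1) + Complex.I • Ψ (pauli 2))
        (Ψ (pauli 1) - Complex.I • Ψ (pauli 2)) (Ψ (pauli 0) - Ψ (pauli 3)) =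
      (2 : ℂ) • (choiMatrix Ψ).submatrix
        (Sum.elim (fun i => (0, i)) (fun i => (1, i)))
        (Sum.elim (fun i => (0, i)) (fun i => (1, i))) := by
  have h00 : pauli 0 + pauli 3 = (2 : ℂ) • Matrix.single 0 0 1 := by
    ext a b; fin_cases a <;> fin_cases b <;> (simp [pauli]; try norm_num)
  have h11 : pauli 0 - pauli 3 = (2 : ℂ) • Matrix.single 1 1 1 := by
    ext a b; fin_cases a <;> fin_cases b <;> (simp [pauli]; try norm_num)
  have h01 : pauli 1 + Complex.I • pauli 2 = (2 : ℂ) • Matrix.single 0 1 1 := by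
    ext a b; fin_cases a <;> fin_cases b <;> (simp [pauli]; try norm_num)
  have h10 : pauli 1 - Complex.I • pauli 2 = (2 : ℂ) • Matrix.single 1 0 1 := by
    ext a b; fin_cases a <;> fin_cases b <;> (simp [pauli]; try norm_num)
  rw [← map_smul, ← map_add, ← map_sub, ← map_add, ← map_sub, h00, h11, h01, h10]
  simp only [map_smul]
  ext x y
  rcases x with i | i <;> rcases y with j | j <;> simp [choiMatrix]

theorem cp_iff_pauli_block_matrix_positive (p : ℕ)
    (Ψ : Matrix (Fin 2) (Fin 2) ℂ →ₗ[ℂ] Matrix (Fin p) (Fin p) ℂ) :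
    IsCompletelyPositive Ψ ↔
      (Matrix.fromBlocks
        (Ψ (pauli 0) + Ψ (pauli 3)) (Ψ (pauli 1) + Complex.I • Ψ (pauli 2))
        (Ψ (pauli 1) - Complex.I • Ψ (pauli 2)) (Ψ (pauli 0) - Ψ (pauli 3))).PosSemidef := by
  rw [isCompletelyPositive_iff_choi, fromBlocks_pauli_eq]
  constructor
  · intro h
    exact (h.submatrix _).smul (by norm_num)
  · intro h
    let g : Fin 2 × Fin p → Fin p ⊕ Fin p := fun x => if x.1 = 0 then Sum.inl x.2 else Sum.inr x.2
    have h2 := (h.smul (show (0 : ℂ) ≤ 1 / 2 by simp)).submatrix g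
    suffices hEq : choiMatrix Ψ = _ by
      rw [hEq]
      exact h2
    ext ⟨a, i⟩ ⟨b, j⟩
    fin_cases a <;> fin_cases b <;> simp [g]
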